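/- Let μ be a Borel probability measure on ℝ^d. Then the upper Hausdorff dimension of μ equals inf{dim_H(E) : E ⊆ ℝ^d Borel, μ(E) = 1}, and the lower Hausdorff dimension of μ equals inf{dim_H(E) : E ⊆ ℝ^d Borel, μ(E) > 0}. -/

import Mathlib

/-!
Local dimensions control Hausdorff dimension in both directions. If `μ (B(x, r)) ≤ r ^ s` for all
small `r` at every point of `A`, then covering `A` by small sets gives `μ A ≤ μH[s] A`; hence
`lowerLocalDim μ ≤ dimH E` almost everywhere on any set `E`. If instead `r ^ s ≤ μ (B(x, r))` for
arbitrarily small `r` at every point of `A`, then Vitali's covering lemma bounds `μH[s] A`; hence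
the points of the support where `lowerLocalDim μ ≤ s` form a set of dimension at most `s`, which is
contained in a Borel set of the same dimension.
-/

open MeasureTheory Filter Metric Set

/-- The lower local dimension of a measure at a point:
`liminf_{r→0} log μ(B(x,r)) / log r`. -/
noncomputable def lowerLocalDim {X : Type*} [MetricSpace X] [MeasurableSpace X]
    (μ : Measure X) (x : X) : EReal :=
  Filter.liminf (fun r : ℝ =>
    ((Real.log (μ (Metric.ball x r)).toReal / Real.log r : ℝ) : EReal))
    (nhdsWithin 0 (Set.Ioi 0))

open scoped ENNReal NNReal Topology

section LogQuotient

variable {m : ℝ≥0∞} {r s : ℝ}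

lemma le_ofReal_rpow_of_lt_log_div_log (hr : r ∈ Ioo 0 1) (hs : 0 ≤ s)
    (h : s < Real.log m.toReal / Real.log r) : m ≤ ENNReal.ofReal r ^ s := by
  -- For `m = 0` and `m = ∞` the junk value `log m.toReal = 0` makes the quotient vanish.
  have hm : Real.log m.toReal ≠ 0 := fun h0 => by simp [h0, hs.not_gt] at h
  obtain ⟨hm0, hm_top⟩ : m ≠ 0 ∧ m ≠ ∞ := by constructor <;> rintro rfl <;> simp at hm
  rw [ENNReal.ofReal_rpow_of_pos hr.1, ← ENNReal.ofReal_toReal hm_top]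
  refine ENNReal.ofReal_le_ofReal ?_
  rw [Real.le_rpow_iff_log_le (ENNReal.toReal_pos hm0 hm_top) hr.1]
  exact ((lt_div_iff_of_neg (Real.log_neg hr.1 hr.2)).1 h).le

lemma ofReal_rpow_le_of_log_div_log_lt (hr : r ∈ Ioo 0 1) (hm : m ≠ 0)
    (h : Real.log m.toReal / Real.log r < s) : ENNReal.ofReal r ^ s ≤ m := by
  rcases eq_or_ne m ∞ with rfl | hm_top
  · exact le_top
  rw [ENNReal.ofReal_rpow_of_pos hr.1, ← ENNReal.ofReal_toReal hm_top]
  refine ENNReal.ofReal_le_ofReal ?_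
  rw [Real.rpow_le_iff_le_log hr.1 (ENNReal.toReal_pos hm hm_top)]
  exact ((div_lt_iff_of_neg (Real.log_neg hr.1 hr.2)).1 h).le

end LogQuotient

lemma ediam_closedBall_le {X : Type*} [PseudoMetricSpace X] (x : X) (r : ℝ) :
    ediam (closedBall x r) ≤ 2 * ENNReal.ofReal r := by
  refine ediam_le fun y hy z hz => ?_
  calc edist y z ≤ edist y x + edist z x := edist_triangle_right y z x
    _ ≤ ENNReal.ofReal r + ENNReal.ofReal r := by
        simp only [edist_dist]
        gcongr <;> assumption
    _ = 2 * ENNReal.ofReal r := (two_mul _).symm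

lemma exists_countable_disjoint_closedBall_cover {X : Type*} [PseudoMetricSpace X]
    [TopologicalSpace.SeparableSpace X] {A : Set X} {P : X → ℝ → Prop}
    (hP : ∀ x ∈ A, ∃ᶠ r in 𝓝[>] 0, P x r) {ε : ℝ} (hε : 0 < ε) :
    ∃ (u : Set X) (r : X → ℝ), u.Countable ∧ (∀ x ∈ u, r x ≤ ε ∧ P x (r x)) ∧
      u.PairwiseDisjoint (fun x => closedBall x (r x)) ∧ A ⊆ ⋃ x : u, closedBall x (5 * r x) := by
  have hradius : ∀ x ∈ A, ∃ r ∈ Ioo 0 ε, P x r := fun x hx =>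
    ((hP x hx).and_eventually (Ioo_mem_nhdsGT hε)).exists.imp fun _ h => h.symm
  choose! r hrε hrP using hradius
  obtain ⟨u, huA, hdisj, hcover⟩ :=
    Vitali.exists_disjoint_subfamily_covering_enlargement_closedBall A id r ε
      (fun x hx => (hrε x hx).2.le) 5 (by norm_num)
  refine ⟨u, r, hdisj.countable_of_nonempty_interior fun x hx => ?_,
    fun x hx => ⟨(hrε x (huA hx)).2.le, hrP x (huA hx)⟩, hdisj, fun x hx => ?_⟩
  · exact ⟨x, ball_subset_interior_closedBall (mem_ball_self (hrε x (huA hx)).1)⟩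
  · obtain ⟨y, hy, hxy⟩ := hcover x hx
    exact mem_iUnion.2 ⟨⟨y, hy⟩, hxy (mem_closedBall_self (hrε x hx).1.le)⟩

lemma measure_inter_le_ediam_rpow {X : Type*} [PseudoMetricSpace X] [MeasurableSpace X]
    {μ : Measure X} {A T : Set X} {s δ : ℝ} (hT : ediam T < ENNReal.ofReal δ)
    (h : ∀ x ∈ A, ∀ r ∈ Ioo 0 δ, μ (ball x r) ≤ ENNReal.ofReal r ^ s) :
    μ (T ∩ A) ≤ ediam T ^ s := by
  rcases (T ∩ A).eq_empty_or_nonempty with h_empty | ⟨x, hxT, hxA⟩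
  · simp [h_empty]
  have hT_top : ediam T ≠ ∞ := (hT.trans ENNReal.ofReal_lt_top).ne
  have hTδ : (ediam T).toReal < δ := (ENNReal.lt_ofReal_iff_toReal_lt hT_top).1 hT
  have hlim : Tendsto (fun r => ENNReal.ofReal r ^ s) (𝓝[>] (ediam T).toReal)
      (𝓝 (ediam T ^ s)) := by
    have hcont : Continuous fun r => ENNReal.ofReal r ^ s :=
      ENNReal.continuous_rpow_const.comp ENNReal.continuous_ofReal
    simpa only [ENNReal.ofReal_toReal hT_top] using
      (hcont.continuousWithinAt (x := (ediam T).toReal)).tendsto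
  refine ge_of_tendsto hlim ?_
  filter_upwards [Ioo_mem_nhdsGT hTδ] with r hr
  have hr_pos : 0 < r := ENNReal.toReal_nonneg.trans_lt hr.1
  have hT_ball : T ⊆ ball x r := fun y hy => by
    have hyx := (edist_le_ediam_of_mem hy hxT).trans_lt
      ((ENNReal.lt_ofReal_iff_toReal_lt hT_top).2 hr.1)
    rwa [edist_lt_ofReal] at hyx
  exact (measure_mono (inter_subset_left.trans hT_ball)).trans (h x hxA r ⟨hr_pos, hr.2⟩)

section HausdorffMeasure

variable {X : Type*} [MetricSpace X] [MeasurableSpace X] [BorelSpace X] {μ : Measure X}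
  {A : Set X} {s : ℝ}

lemma measure_le_hausdorffMeasure_of_forall_measure_ball_le {δ : ℝ} (hδ : 0 < δ)
    (h : ∀ x ∈ A, ∀ r ∈ Ioo 0 δ, μ (ball x r) ≤ ENNReal.ofReal r ^ s) :
    μ A ≤ μH[s] A := by
  have hle : OuterMeasure.restrict A μ.toOuterMeasure ≤ OuterMeasure.mkMetric (· ^ s) := by
    refine OuterMeasure.le_mkMetric _ _ (ENNReal.ofReal (δ / 2)) (by simpa using hδ) fun T hT => ?_
    rw [OuterMeasure.restrict_apply]
    refine measure_inter_le_ediam_rpow (hT.trans_lt ?_) h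
    exact (ENNReal.ofReal_lt_ofReal_iff hδ).2 (half_lt_self hδ)
  simpa [Measure.hausdorffMeasure, ← OuterMeasure.coe_mkMetric] using hle A

theorem measure_le_hausdorffMeasure_of_eventually_measure_ball_le
    (h : ∀ x ∈ A, ∀ᶠ r in 𝓝[>] 0, μ (ball x r) ≤ ENNReal.ofReal r ^ s) :
    μ A ≤ μH[s] A := by
  let B : ℕ → Set X := fun n =>
    {x ∈ A | ∀ r ∈ Ioo (0 : ℝ) (1 / (n + 1)), μ (ball x r) ≤ ENNReal.ofReal r ^ s}
  have hB_mono : Monotone B := fun m n hmn x hx =>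
    ⟨hx.1, fun r hr => hx.2 r ⟨hr.1, hr.2.trans_le (Nat.one_div_le_one_div hmn)⟩⟩
  have hAB : A ⊆ ⋃ n, B n := fun x hx => by
    obtain ⟨δ, hδ, hball⟩ := mem_nhdsGT_iff_exists_Ioo_subset.1 (h x hx)
    obtain ⟨n, hn⟩ := exists_nat_one_div_lt (mem_Ioi.1 hδ)
    exact mem_iUnion.2 ⟨n, hx, fun r hr => hball ⟨hr.1, hr.2.trans hn⟩⟩
  calc μ A ≤ μ (⋃ n, B n) := measure_mono hAB
    _ = ⨆ n, μ (B n) := hB_mono.measure_iUnion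
    _ ≤ μH[s] A := iSup_le fun n =>
        (measure_le_hausdorffMeasure_of_forall_measure_ball_le Nat.one_div_pos_of_nat
          fun x hx => hx.2).trans (measure_mono (sep_subset _ _))

lemma tsum_ediam_closedBall_rpow_le (hs : 0 ≤ s) {u : Set X} {r : X → ℝ}
    (hdisj : u.PairwiseDisjoint fun x => closedBall x (r x))
    (hμ : ∀ x ∈ u, ENNReal.ofReal (r x) ^ s ≤ μ (closedBall x (r x))) :
    ∑' x : u, ediam (closedBall (x : X) (5 * r x)) ^ s ≤ 10 ^ s * μ univ := by
  have hterm (x : u) :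
      ediam (closedBall (x : X) (5 * r x)) ^ s ≤ 10 ^ s * μ (closedBall (x : X) (r x)) :=
    calc ediam (closedBall (x : X) (5 * r x)) ^ s
        ≤ (2 * ENNReal.ofReal (5 * r x)) ^ s := by gcongr; exact ediam_closedBall_le _ _
      _ = 10 ^ s * ENNReal.ofReal (r x) ^ s := by
          rw [ENNReal.ofReal_mul (by norm_num), ENNReal.ofReal_ofNat, ← mul_assoc,
            ENNReal.mul_rpow_of_nonneg _ _ hs]
          norm_num
      _ ≤ 10 ^ s * μ (closedBall (x : X) (r x)) := by gcongr; exact hμ x x.2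
  calc ∑' x : u, ediam (closedBall (x : X) (5 * r x)) ^ s
      ≤ ∑' x : u, 10 ^ s * μ (closedBall (x : X) (r x)) := ENNReal.tsum_le_tsum hterm
    _ = 10 ^ s * ∑' x : u, μ (closedBall (x : X) (r x)) := ENNReal.tsum_mul_left
    _ ≤ 10 ^ s * μ univ := by
        gcongr
        exact tsum_measure_le_measure_univ
          (fun x => measurableSet_closedBall.nullMeasurableSet)
          fun x y hxy => (hdisj x.2 y.2 (Subtype.coe_ne_coe.2 hxy)).aedisjoint

theorem hausdorffMeasure_le_of_frequently_le_measure_closedBall [SecondCountableTopology X]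
    (hs : 0 ≤ s)
    (h : ∀ x ∈ A, ∃ᶠ r in 𝓝[>] 0, ENNReal.ofReal r ^ s ≤ μ (closedBall x r)) :
    μH[s] A ≤ 10 ^ s * μ univ := by
  choose u r hcount hr hdisj hcover using fun n : ℕ =>
    exists_countable_disjoint_closedBall_cover h (Nat.one_div_pos_of_nat (α := ℝ) (n := n))
  have (n : ℕ) : Countable (u n) := (hcount n).to_subtype
  have hmesh : Tendsto (fun n : ℕ => 2 * ENNReal.ofReal (5 * (1 / ((n : ℝ) + 1)))) atTop (𝓝 0) := by
    have h5 := (tendsto_one_div_add_atTop_nhds_zero_nat (𝕜 := ℝ)).const_mul 5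
    simpa using ENNReal.Tendsto.const_mul (ENNReal.tendsto_ofReal h5) (.inr ENNReal.ofNat_ne_top)
  have hdiam (n : ℕ) (x : u n) : ediam (closedBall (x : X) (5 * r n x)) ≤
      2 * ENNReal.ofReal (5 * (1 / ((n : ℝ) + 1))) := by
    grw [ediam_closedBall_le, (hr n x x.2).1]
  calc μH[s] A
      ≤ liminf (fun n => ∑' x : u n, ediam (closedBall (x : X) (5 * r n x)) ^ s) atTop :=
        Measure.hausdorffMeasure_le_liminf_tsum s A _ hmesh
          (fun n (x : u n) => closedBall (x : X) (5 * r n x)) (.of_forall hdiam) (.of_forall hcover)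
    _ ≤ liminf (fun _ : ℕ => 10 ^ s * μ univ) atTop := liminf_le_liminf <| .of_forall fun n =>
        tsum_ediam_closedBall_rpow_le hs (hdisj n) fun x hx => (hr n x hx).2
    _ = 10 ^ s * μ univ := liminf_const _

theorem exists_measurableSet_superset_dimH_eq (A : Set X) :
    ∃ E, A ⊆ E ∧ MeasurableSet E ∧ dimH E = dimH A := by
  let hull (q : ℚ) : Set X := toMeasurable μH[(q : ℝ).toNNReal] A
  have hA : A ⊆ ⋂ q, hull q := subset_iInter fun q => subset_toMeasurable _ _
  refine ⟨⋂ q, hull q, hA, .iInter fun q => measurableSet_toMeasurable _ _,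
    le_antisymm (le_of_forall_gt_imp_ge_of_dense fun c hc => ?_) (dimH_mono hA)⟩
  obtain ⟨q, -, hAq, hqc⟩ := ENNReal.lt_iff_exists_rat_btwn.1 hc
  have hhull : μH[(q : ℝ).toNNReal] (hull q) = 0 :=
    (measure_toMeasurable A).trans (hausdorffMeasure_of_dimH_lt hAq)
  have hinter := measure_mono_null (iInter_subset hull q) hhull
  exact (dimH_le_of_hausdorffMeasure_ne_top (hinter.trans_ne ENNReal.zero_ne_top)).trans hqc.le

end HausdorffMeasure

section LowerLocalDim

variable {X : Type*} [MetricSpace X] [MeasurableSpace X] {μ : Measure X}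

lemma eventually_measure_ball_le_of_lt_lowerLocalDim {x : X} {s : ℝ} (hs : 0 ≤ s)
    (h : s < lowerLocalDim μ x) :
    ∀ᶠ r in 𝓝[>] 0, μ (ball x r) ≤ ENNReal.ofReal r ^ s := by
  filter_upwards [eventually_lt_of_lt_liminf h, Ioo_mem_nhdsGT one_pos] with r hr hr01
  exact le_ofReal_rpow_of_lt_log_div_log hr01 hs (EReal.coe_lt_coe_iff.1 hr)

-- Since `Real.log 0 = 0`, off the support `lowerLocalDim` is `0` rather than the usual `∞`.
lemma frequently_le_measure_ball_of_lowerLocalDim_lt {x : X} {s : ℝ} (hx : x ∈ μ.support)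
    (h : lowerLocalDim μ x < s) :
    ∃ᶠ r in 𝓝[>] 0, ENNReal.ofReal r ^ s ≤ μ (ball x r) := by
  have hlt := frequently_lt_of_liminf_lt (by isBoundedDefault) h
  refine (hlt.and_eventually (Ioo_mem_nhdsGT one_pos)).mono fun r ⟨hr, hr01⟩ => ?_
  have hpos := (Measure.mem_support_iff_forall x).1 hx _ (ball_mem_nhds x hr01.1)
  exact ofReal_rpow_le_of_log_div_log_lt hr01 hpos.ne' (EReal.coe_lt_coe_iff.1 hr)

lemma lowerLocalDim_nonneg [IsFiniteMeasure μ] (x : X) : 0 ≤ lowerLocalDim μ x := by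
  set M : ℝ := max 1 (μ univ).toReal
  have hM : Tendsto (fun r => ((Real.log M / Real.log r : ℝ) : EReal)) (𝓝[>] 0) (𝓝 0) :=
    (continuous_coe_real_ereal.tendsto 0).comp (Real.tendsto_log_nhdsGT_zero.const_div_atBot _)
  rw [← hM.liminf_eq]
  refine liminf_le_liminf ?_
  filter_upwards [Ioo_mem_nhdsGT one_pos] with r hr
  refine EReal.coe_le_coe_iff.2 (div_le_div_of_nonpos_of_le (Real.log_neg hr.1 hr.2).le ?_)
  rcases (ENNReal.toReal_nonneg (a := μ (ball x r))).eq_or_lt with h0 | hpos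
  · simpa [← h0] using Real.log_nonneg (le_max_left _ _)
  · refine Real.log_le_log hpos (le_max_of_le_right ?_)
    exact ENNReal.toReal_mono (measure_ne_top μ _) (measure_mono (subset_univ _))

variable [BorelSpace X]

lemma measure_inter_setOf_lt_lowerLocalDim_eq_zero {E : Set X} {s : ℝ≥0} (hE : dimH E < s) :
    μ (E ∩ {x | ((s : ℝ) : EReal) < lowerLocalDim μ x}) = 0 := by
  have hle := measure_le_hausdorffMeasure_of_eventually_measure_ball_le
    (A := E ∩ {x | ((s : ℝ) : EReal) < lowerLocalDim μ x}) fun x hx =>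
      eventually_measure_ball_le_of_lt_lowerLocalDim s.coe_nonneg hx.2
  exact nonpos_iff_eq_zero.1 <| hle.trans_eq <|
    measure_mono_null inter_subset_left (hausdorffMeasure_of_dimH_lt hE)

theorem ae_lowerLocalDim_le_dimH (μ : Measure X) (E : Set X) :
    ∀ᵐ x ∂μ, x ∈ E → lowerLocalDim μ x ≤ dimH E := by
  have hrat : ∀ᵐ x ∂μ, ∀ q : ℚ, (dimH E : EReal) < (q : ℝ) → x ∈ E →
      lowerLocalDim μ x ≤ (q : ℝ) := by
    refine ae_all_iff.2 fun q => eventually_imp_distrib_left.2 fun hq => ?_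
    lift (q : ℝ) to ℝ≥0 using
      EReal.coe_nonneg.1 ((EReal.coe_ennreal_nonneg _).trans hq.le) with s
    have hEs : dimH E < s := EReal.coe_ennreal_lt_coe_ennreal_iff.1 hq
    filter_upwards [measure_eq_zero_iff_ae_notMem.1
      (measure_inter_setOf_lt_lowerLocalDim_eq_zero (μ := μ) hEs)] with x hx hxE
    exact not_lt.1 fun hlt => hx ⟨hxE, hlt⟩
  filter_upwards [hrat] with x hx hxE
  refine le_of_forall_gt_imp_ge_of_dense fun c hc => ?_
  obtain ⟨q, hEq, hqc⟩ := EReal.lt_iff_exists_rat_btwn.1 hc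
  exact (hx q hEq hxE).trans hqc.le

variable [SecondCountableTopology X] [IsFiniteMeasure μ]

lemma dimH_setOf_lowerLocalDim_lt_inter_support_le (s : ℝ≥0) :
    dimH ({x | lowerLocalDim μ x < (s : ℝ)} ∩ μ.support) ≤ s := by
  refine dimH_le_of_hausdorffMeasure_ne_top (lt_of_le_of_lt
    (hausdorffMeasure_le_of_frequently_le_measure_closedBall (μ := μ) s.coe_nonneg
      fun x hx => ?_) ?_).ne
  · exact (frequently_le_measure_ball_of_lowerLocalDim_lt hx.2 hx.1).mono fun r hr =>
      hr.trans (measure_mono ball_subset_closedBall)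
  · exact ENNReal.mul_lt_top (ENNReal.rpow_lt_top_of_nonneg s.coe_nonneg ENNReal.ofNat_ne_top)
      (measure_lt_top μ univ)

theorem dimH_setOf_lowerLocalDim_le_inter_support_le {s : EReal} (hs : 0 ≤ s) :
    (dimH ({x | lowerLocalDim μ x ≤ s} ∩ μ.support) : EReal) ≤ s := by
  refine le_of_forall_gt_imp_ge_of_dense fun c hc => ?_
  obtain ⟨t, hst, htc⟩ := EReal.lt_iff_exists_real_btwn.1 hc
  lift t to ℝ≥0 using EReal.coe_nonneg.1 (hs.trans hst.le)
  have hsub : {x | lowerLocalDim μ x ≤ s} ⊆ {x | lowerLocalDim μ x < (t : ℝ)} :=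
    fun x hx => lt_of_le_of_lt hx hst
  have hdim := (dimH_mono (inter_subset_inter_left μ.support hsub)).trans
    (dimH_setOf_lowerLocalDim_lt_inter_support_le t)
  exact (EReal.coe_ennreal_le_coe_ennreal_iff.2 hdim).trans htc.le

theorem exists_measurableSet_ae_mem_of_lowerLocalDim_le {s : EReal} (hs : 0 ≤ s) :
    ∃ E, MeasurableSet E ∧ (dimH E : EReal) ≤ s ∧
      ∀ᵐ x ∂μ, lowerLocalDim μ x ≤ s → x ∈ E := by
  obtain ⟨E, hsub, hE, hdim⟩ :=
    exists_measurableSet_superset_dimH_eq ({x | lowerLocalDim μ x ≤ s} ∩ μ.support)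
  refine ⟨E, hE, hdim ▸ dimH_setOf_lowerLocalDim_le_inter_support_le hs, ?_⟩
  filter_upwards [Measure.support_mem_ae (μ := μ)] with x hx hxs using hsub ⟨hxs, hx⟩

theorem essSup_lowerLocalDim_eq_iInf_dimH [NeZero μ] :
    essSup (lowerLocalDim μ) μ =
      ⨅ (E : Set X) (_ : MeasurableSet E) (_ : μ E = μ univ), (dimH E : EReal) := by
  refine le_antisymm (le_iInf fun E => le_iInf₂ fun hE hμE => essSup_le_of_ae_le _ ?_) ?_
  · filter_upwards [(ae_mem_iff_measure_eq hE.nullMeasurableSet).2 hμE,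
      ae_lowerLocalDim_le_dimH μ E] with x hxE hx using hx hxE
  · have hnonneg : 0 ≤ essSup (lowerLocalDim μ) μ :=
      (essSup_const 0 (NeZero.ne μ)).ge.trans (essSup_mono_ae (.of_forall lowerLocalDim_nonneg))
    obtain ⟨E, hE, hdim, hmem⟩ := exists_measurableSet_ae_mem_of_lowerLocalDim_le (μ := μ) hnonneg
    have hμE : ∀ᵐ x ∂μ, x ∈ E := by
      filter_upwards [hmem, ae_le_essSup (f := lowerLocalDim μ)] with x hx hle using hx hle
    exact iInf_le_of_le E <| iInf₂_le_of_le hE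
      ((ae_mem_iff_measure_eq hE.nullMeasurableSet).1 hμE) hdim

theorem essInf_lowerLocalDim_eq_iInf_dimH :
    essInf (lowerLocalDim μ) μ =
      ⨅ (E : Set X) (_ : MeasurableSet E) (_ : 0 < μ E), (dimH E : EReal) := by
  refine le_antisymm (le_iInf fun E => le_iInf₂ fun _ hμE => ?_) ?_
  · obtain ⟨x, hxE, hinf, hdim⟩ := ((frequently_ae_mem_iff.2 hμE.ne').and_eventually
      ((ae_essInf_le (f := lowerLocalDim μ)).and (ae_lowerLocalDim_le_dimH μ E))).exists
    exact hinf.trans (hdim hxE)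
  · refine le_of_forall_gt_imp_ge_of_dense fun c hc => ?_
    have hnonneg : 0 ≤ essInf (lowerLocalDim μ) μ :=
      le_essInf_of_ae_le 0 (.of_forall lowerLocalDim_nonneg)
    obtain ⟨E, hE, hdim, hmem⟩ :=
      exists_measurableSet_ae_mem_of_lowerLocalDim_le (μ := μ) (hnonneg.trans hc.le)
    have hlt : ∃ᵐ x ∂μ, lowerLocalDim μ x < c := frequently_lt_of_liminf_lt (by isBoundedDefault) hc
    have hμE : μ E ≠ 0 := frequently_ae_mem_iff.1 <|
      (hlt.and_eventually hmem).mono fun x ⟨hx, hxE⟩ => hxE hx.le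
    exact iInf_le_of_le E (iInf₂_le_of_le hE (pos_iff_ne_zero.2 hμE) hdim)

end LowerLocalDim

theorem stmt0_general {X : Type*} [MetricSpace X] [MeasurableSpace X] [BorelSpace X]
    [SecondCountableTopology X] (μ : Measure X) [IsFiniteMeasure μ] [NeZero μ] :
    (essSup (lowerLocalDim μ) μ =
      ⨅ (E : Set X) (_ : MeasurableSet E) (_ : μ E = μ univ), (dimH E : EReal)) ∧
    (essInf (lowerLocalDim μ) μ =
      ⨅ (E : Set X) (_ : MeasurableSet E) (_ : 0 < μ E), (dimH E : EReal)) :=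
  ⟨essSup_lowerLocalDim_eq_iInf_dimH, essInf_lowerLocalDim_eq_iInf_dimH⟩

/-- For a Borel probability measure `μ` on `ℝ^d`, the upper Hausdorff
dimension of `μ` (the `μ`-essential supremum of the lower local dimensions) equals
`inf {dim_H E : E Borel, μ E = 1}`, and the lower Hausdorff dimension of `μ`
(the `μ`-essential infimum of the lower local dimensions) equals
`inf {dim_H E : E Borel, μ E > 0}`. -/
theorem stmt0 (d : ℕ) (hd : 0 < d) (μ : Measure (EuclideanSpace ℝ (Fin d)))
    [IsProbabilityMeasure μ] :
    (essSup (lowerLocalDim μ) μ =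
      ⨅ (E : Set (EuclideanSpace ℝ (Fin d))) (_ : MeasurableSet E) (_ : μ E = 1),
        (dimH E : EReal)) ∧
    (essInf (lowerLocalDim μ) μ =
      ⨅ (E : Set (EuclideanSpace ℝ (Fin d))) (_ : MeasurableSet E) (_ : 0 < μ E),
        (dimH E : EReal)) := by
  simpa only [measure_univ] using stmt0_general μ
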